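/- Suppose {q_0, …, q_{N−1}} is a strongly proper interpolation basis for the Birkhoff functionals L_1, …, L_N. Then for every k with 1 ≤ k ≤ N: (i) L_i(g_{k−2,k−1}) = 0 for all i = 1, …, k−1; and (ii) L_k(g_{k−2,k−1}) = det(V_{k−1}) / det(V_{k−2}), which is nonzero. (For k = 1 the convention g_{−1,0} = q_0 applies and the claim reads L_1(q_0) = det V_0 ≠ 0.) -/

import Mathlib

open Polynomial Matrix

/-- The matrix `V_{k-1}` whose `(i,j)` entry is `L i (q j)`, for the first `k`
functionals and polynomials. -/
noncomputable def Vmat {N : ℕ} (L : Fin N → (Polynomial ℝ →ₗ[ℝ] ℝ)) (q : Fin N → Polynomial ℝ)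
    (k : ℕ) (hk : k ≤ N) : Matrix (Fin k) (Fin k) ℝ :=
  Matrix.of fun i j => L (Fin.castLE hk i) (q (Fin.castLE hk j))

/-- The auxiliary polynomial `g_{m-1, k}` (so `gAux L q m hm k` uses the first `m`
interpolation conditions; `gAux L q 0 _ k = q k` is the convention `g_{-1,k} = q k`). -/
noncomputable def gAux {N : ℕ} (L : Fin N → (Polynomial ℝ →ₗ[ℝ] ℝ)) (q : Fin N → Polynomial ℝ)
    (m : ℕ) (hm : m ≤ N) (k : Fin N) : Polynomial ℝ :=
  q k - ∑ i : Fin m,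
    (((Vmat L q m hm)⁻¹ *ᵥ fun i : Fin m => L (Fin.castLE hm i) (q k)) i) • q (Fin.castLE hm i)

theorem comp_finSumFinEquiv_eq_sumElim {α : Type*} {m : ℕ} (f : Fin (m + 1) → α) :
    f ∘ finSumFinEquiv = Sum.elim (Fin.init f) fun _ : Fin 1 => f (Fin.last m) := by
  ext (i | i)
  · rfl
  · rw [Subsingleton.elim i 0]
    rfl

section Interpolation

variable {R M ι κ : Type*} [CommRing R] [AddCommGroup M] [Module R M]

/-- The collocation matrix, with entries `ℓ i (v j)`, of a family of functionals `ℓ` on a family of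
vectors `v`; the matrices `Vmat` are the case of polynomials. -/
def collocationMatrix (ℓ : ι → Module.Dual R M) (v : κ → M) : Matrix ι κ R :=
  Matrix.of fun i j => ℓ i (v j)

theorem collocationMatrix_apply (ℓ : ι → Module.Dual R M) (v : κ → M) (i : ι) (j : κ) :
    collocationMatrix ℓ v i j = ℓ i (v j) :=
  rfl

variable [Fintype ι] [DecidableEq ι]

/-- The error `x - ∑ i, c i • v i` of interpolating `x` at the functionals `ℓ` from the span of `v`,
generalizing `gAux`. The coefficients `c` solve the collocation system; if its matrix is singular,
they are `0` because the matrix inverse is then `0`. -/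
noncomputable def interpolationResidual (ℓ : ι → Module.Dual R M) (v : ι → M) (x : M) : M :=
  x - ∑ i, ((collocationMatrix ℓ v)⁻¹ *ᵥ fun j => ℓ j x) i • v i

theorem apply_interpolationResidual (ℓ : ι → Module.Dual R M) (v : ι → M) (μ : Module.Dual R M)
    (x : M) :
    μ (interpolationResidual ℓ v x) =
      μ x - (fun i => μ (v i)) ⬝ᵥ ((collocationMatrix ℓ v)⁻¹ *ᵥ fun j => ℓ j x) := by
  simp only [interpolationResidual, map_sub, map_sum, map_smul, smul_eq_mul, dotProduct, mul_comm]

theorem apply_interpolationResidual_eq_zero {ℓ : ι → Module.Dual R M} {v : ι → M}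
    (h : IsUnit (collocationMatrix ℓ v).det) (i : ι) (x : M) :
    ℓ i (interpolationResidual ℓ v x) = 0 := by
  have hsolve : collocationMatrix ℓ v *ᵥ ((collocationMatrix ℓ v)⁻¹ *ᵥ fun j => ℓ j x) =
      fun j => ℓ j x := by
    rw [mulVec_mulVec, mul_nonsing_inv _ h, one_mulVec]
  rw [apply_interpolationResidual, sub_eq_zero]
  exact (congrFun hsolve i).symm

theorem collocationMatrix_interpolationResidual (ℓ : ι → Module.Dual R M) (v : ι → M)
    (μ : κ → Module.Dual R M) (w : κ → M) :
    collocationMatrix μ (fun j => interpolationResidual ℓ v (w j)) =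
      collocationMatrix μ w -
        collocationMatrix μ v * (collocationMatrix ℓ v)⁻¹ * collocationMatrix ℓ w := by
  ext i j
  rw [Matrix.mul_assoc]
  exact apply_interpolationResidual ℓ v (μ i) (w j)

/-- By `collocationMatrix_interpolationResidual`, the residuals collocate to a Schur complement. -/
theorem det_collocationMatrix_sumElim [Fintype κ] [DecidableEq κ] {ℓ : ι → Module.Dual R M}
    {v : ι → M} (h : IsUnit (collocationMatrix ℓ v).det) (μ : κ → Module.Dual R M) (w : κ → M) :
    (collocationMatrix (Sum.elim ℓ μ) (Sum.elim v w)).det =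
      (collocationMatrix ℓ v).det *
        (collocationMatrix μ fun j => interpolationResidual ℓ v (w j)).det := by
  have hblocks : collocationMatrix (Sum.elim ℓ μ) (Sum.elim v w) =
      fromBlocks (collocationMatrix ℓ v) (collocationMatrix ℓ w)
        (collocationMatrix μ v) (collocationMatrix μ w) :=
    (fromBlocks_toBlocks _).symm
  let := invertibleOfIsUnitDet _ h
  rw [hblocks, det_fromBlocks₁₁, invOf_eq_nonsing_inv, collocationMatrix_interpolationResidual]

theorem det_collocationMatrix_succ {m : ℕ} {ℓ : Fin (m + 1) → Module.Dual R M}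
    {v : Fin (m + 1) → M} (h : IsUnit (collocationMatrix (Fin.init ℓ) (Fin.init v)).det) :
    (collocationMatrix ℓ v).det =
      (collocationMatrix (Fin.init ℓ) (Fin.init v)).det *
        ℓ (Fin.last m) (interpolationResidual (Fin.init ℓ) (Fin.init v) (v (Fin.last m))) :=
  calc (collocationMatrix ℓ v).det
      = (collocationMatrix (ℓ ∘ finSumFinEquiv) (v ∘ finSumFinEquiv)).det :=
        (det_submatrix_equiv_self finSumFinEquiv _).symm
    _ = (collocationMatrix (Fin.init ℓ) (Fin.init v)).det *
        (collocationMatrix (fun _ : Fin 1 => ℓ (Fin.last m)) fun _ =>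
          interpolationResidual (Fin.init ℓ) (Fin.init v) (v (Fin.last m))).det := by
        rw [comp_finSumFinEquiv_eq_sumElim, comp_finSumFinEquiv_eq_sumElim,
          det_collocationMatrix_sumElim h]
    _ = _ := by rw [det_fin_one, collocationMatrix_apply]

end Interpolation

theorem birkhoff_newton_basis_values_general {K M : Type*} [Field K] [AddCommGroup M] [Module K M]
    {m : ℕ} (ℓ : Fin (m + 1) → Module.Dual K M) (v : Fin (m + 1) → M)
    (hinit : IsUnit (collocationMatrix (Fin.init ℓ) (Fin.init v)).det)
    (h : IsUnit (collocationMatrix ℓ v).det) :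
    (∀ i : Fin m, ℓ i.castSucc
      (interpolationResidual (Fin.init ℓ) (Fin.init v) (v (Fin.last m))) = 0) ∧
    ℓ (Fin.last m) (interpolationResidual (Fin.init ℓ) (Fin.init v) (v (Fin.last m))) =
      (collocationMatrix ℓ v).det / (collocationMatrix (Fin.init ℓ) (Fin.init v)).det ∧
    ℓ (Fin.last m) (interpolationResidual (Fin.init ℓ) (Fin.init v) (v (Fin.last m))) ≠ 0 := by
  have hvalue : ℓ (Fin.last m)
      (interpolationResidual (Fin.init ℓ) (Fin.init v) (v (Fin.last m))) =
      (collocationMatrix ℓ v).det / (collocationMatrix (Fin.init ℓ) (Fin.init v)).det := by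
    rw [det_collocationMatrix_succ hinit, mul_div_cancel_left₀ _ hinit.ne_zero]
  refine ⟨fun i => apply_interpolationResidual_eq_zero hinit i _, hvalue, ?_⟩
  rw [hvalue]
  exact div_ne_zero h.ne_zero hinit.ne_zero

/-- for a strongly proper interpolation basis `q` for Birkhoff functionals `L`,
for every `1 ≤ k ≤ N` the polynomial `g_{k-2,k-1}` is annihilated by `L_1, …, L_{k-1}`,
while `L_k (g_{k-2,k-1}) = det V_{k-1} / det V_{k-2} ≠ 0`. -/
theorem birkhoff_newton_basis_values
    (N : ℕ) (hN : 1 ≤ N) (z : Fin N → ℝ) (α : Fin N → ℕ)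
    (L : Fin N → (Polynomial ℝ →ₗ[ℝ] ℝ))
    (hL : ∀ (i : Fin N) (p : Polynomial ℝ),
      L i p = Polynomial.eval (z i) (Polynomial.derivative^[α i] p))
    (q : Fin N → Polynomial ℝ)
    (hq : ∀ (k : ℕ) (hk : k ≤ N), IsUnit (Vmat L q k hk).det) :
    ∀ (k : ℕ) (hk1 : 1 ≤ k) (hk : k ≤ N),
      (∀ (i : ℕ) (hi : i < k - 1),
        L ⟨i, by omega⟩ (gAux L q (k - 1) (by omega) ⟨k - 1, by omega⟩) = 0) ∧
      L ⟨k - 1, by omega⟩ (gAux L q (k - 1) (by omega) ⟨k - 1, by omega⟩) =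
        (Vmat L q k hk).det / (Vmat L q (k - 1) (by omega)).det ∧
      L ⟨k - 1, by omega⟩ (gAux L q (k - 1) (by omega) ⟨k - 1, by omega⟩) ≠ 0 := by
  rintro (_ | m) hk1 hk
  · omega
  · have h := birkhoff_newton_basis_values_general (fun i => L (Fin.castLE hk i))
      (fun j => q (Fin.castLE hk j)) (hq m (by omega)) (hq (m + 1) hk)
    exact ⟨fun i hi => h.1 ⟨i, hi⟩, h.2⟩
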